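/- Let k be an algebraically closed field of characteristic 2 and let S ⊂ ℙ¹(k) be a set of exactly 5 points. Let G = {g ∈ PGL₂(k) : g·S = S} be the setwise stabilizer of S under the natural action of PGL₂(k) on ℙ¹(k). Then G is a finite group isomorphic (as an abstract group) to exactly one of: the trivial group, the Klein four-group (ℤ/2ℤ)², or the alternating group A₅. -/

import Mathlib

open Pointwise

/-- The subgroup of scalar matrices in `GL₂(k)`; `PGL₂(k)` is the quotient of
`GL₂(k)` by this subgroup. -/
def scalarSubgroup2 (k : Type*) [Field k] : Subgroup (GL (Fin 2) k) :=
  (Units.map (algebraMap k (Matrix (Fin 2) (Fin 2) k)).toMonoidHom).range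

instance scalarSubgroup2_normal (k : Type*) [Field k] :
    (scalarSubgroup2 k).Normal := by
  constructor
  rintro u ⟨c, rfl⟩ g
  refine ⟨c, ?_⟩
  have h : (g : Matrix (Fin 2) (Fin 2) k) *
      (algebraMap k (Matrix (Fin 2) (Fin 2) k) (c : k)) *
        ((g⁻¹ : GL (Fin 2) k) : Matrix (Fin 2) (Fin 2) k) =
      algebraMap k (Matrix (Fin 2) (Fin 2) k) (c : k) := by
    rw [← Algebra.commutes (c : k) (g : Matrix (Fin 2) (Fin 2) k), mul_assoc]
    have h1 : (g : Matrix (Fin 2) (Fin 2) k) *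
        ((g⁻¹ : GL (Fin 2) k) : Matrix (Fin 2) (Fin 2) k) = 1 := by
      rw [← Units.val_mul, mul_inv_cancel, Units.val_one]
    rw [h1, mul_one]
  apply Units.ext
  simpa using h.symm

lemma toLin'_GL_injective {k : Type*} [Field k] (A : GL (Fin 2) k) :
    Function.Injective (Matrix.toLin' (A : Matrix (Fin 2) (Fin 2) k)) := by
  have h : ∀ x, Matrix.toLin' ((A⁻¹ : GL (Fin 2) k) : Matrix (Fin 2) (Fin 2) k)
      (Matrix.toLin' (A : Matrix (Fin 2) (Fin 2) k) x) = x := by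
    intro x
    rw [← Matrix.toLin'_mul_apply, ← Units.val_mul, inv_mul_cancel, Units.val_one,
      Matrix.toLin'_one, LinearMap.id_apply]
  exact Function.LeftInverse.injective h

/-- The action of `GL₂(k)` on the projective line `ℙ¹(k)`. -/
noncomputable instance glActionP1 (k : Type*) [Field k] :
    MulAction (GL (Fin 2) k) (Projectivization k (Fin 2 → k)) where
  smul A p := Projectivization.map
    (Matrix.toLin' (A : Matrix (Fin 2) (Fin 2) k)) (toLin'_GL_injective A) p
  one_smul p := by
    induction p using Projectivization.ind with
    | h v hv =>
      show Projectivization.mk k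
        (Matrix.toLin' ((1 : GL (Fin 2) k) : Matrix (Fin 2) (Fin 2) k) v) _ =
          Projectivization.mk k v hv
      rw [Projectivization.mk_eq_mk_iff]
      exact ⟨1, by simp [Units.val_one, Matrix.toLin'_one]⟩
  mul_smul A B p := by
    induction p using Projectivization.ind with
    | h v hv =>
      show Projectivization.mk k
        (Matrix.toLin' (((A * B : GL (Fin 2) k)) : Matrix (Fin 2) (Fin 2) k) v) _ =
        Projectivization.mk k
          (Matrix.toLin' (A : Matrix (Fin 2) (Fin 2) k)
            (Matrix.toLin' (B : Matrix (Fin 2) (Fin 2) k) v)) _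
      rw [Projectivization.mk_eq_mk_iff]
      exact ⟨1, by simp [Units.val_mul, Matrix.toLin'_mul_apply]⟩

lemma glActionP1_smul_mk {k : Type*} [Field k] (A : GL (Fin 2) k)
    (v : Fin 2 → k) (hv : v ≠ 0) :
    A • Projectivization.mk k v hv =
      Projectivization.mk k (Matrix.toLin' (A : Matrix (Fin 2) (Fin 2) k) v)
        (fun h => hv (toLin'_GL_injective A (h.trans (map_zero _).symm))) := rfl

/-- The induced action of `PGL₂(k)` on the projective line `ℙ¹(k)`, by
fractional linear transformations. -/
noncomputable instance pglActionP1 (k : Type*) [Field k] :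
    MulAction (GL (Fin 2) k ⧸ scalarSubgroup2 k)
      (Projectivization k (Fin 2 → k)) where
  smul g p := Quotient.liftOn' g (fun A => A • p) (fun A B hAB => by
    rw [QuotientGroup.leftRel_apply] at hAB
    obtain ⟨c, hc⟩ := hAB
    have hB : B = A * Units.map (algebraMap k (Matrix (Fin 2) (Fin 2) k)).toMonoidHom c := by
      rw [hc, mul_inv_cancel_left]
    have hu : (Units.map (algebraMap k (Matrix (Fin 2) (Fin 2) k)).toMonoidHom c) • p = p := by
      induction p using Projectivization.ind with
      | h v hv =>
        rw [glActionP1_smul_mk, Projectivization.mk_eq_mk_iff]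
        refine ⟨c, ?_⟩
        show (c : k) • v = _
        have : ((Units.map (algebraMap k (Matrix (Fin 2) (Fin 2) k)).toMonoidHom c :
            GL (Fin 2) k) : Matrix (Fin 2) (Fin 2) k) = (c : k) • (1 : Matrix (Fin 2) (Fin 2) k) := by
          simp [Algebra.algebraMap_eq_smul_one]
        rw [this, map_smul, Matrix.toLin'_one]
        simp
    show A • p = B • p
    rw [hB, mul_smul, hu])
  one_smul p := by
    show (1 : GL (Fin 2) k) • p = p
    exact one_smul _ p
  mul_smul g h p := by
    refine Quotient.inductionOn₂' g h (fun A B => ?_)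
    show (A * B : GL (Fin 2) k) • p = A • (B • p)
    exact mul_smul A B p

section Helpers
open Equiv

/-! ### Finite combinatorics in `Perm (Fin 5)` -/

def FixThree (σ : Perm (Fin 5)) : Prop :=
  σ ≠ 1 ∧ ∃ i j l, i ≠ j ∧ i ≠ l ∧ j ≠ l ∧ σ i = i ∧ σ j = j ∧ σ l = l

instance : DecidablePred FixThree := fun σ => by unfold FixThree; infer_instance

def DoubleSwap (σ : Perm (Fin 5)) : Prop :=
  ∃ a c e, σ (σ a) = a ∧ σ (σ c) = c ∧ σ a ≠ a ∧ σ c ≠ c ∧ c ≠ a ∧ c ≠ σ a ∧ σ e = e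

instance : DecidablePred DoubleSwap := fun σ => by unfold DoubleSwap; infer_instance

def ThreePattern (σ : Perm (Fin 5)) : Prop :=
  ∃ a d e, σ (σ (σ a)) = a ∧ σ a ≠ a ∧ σ d = d ∧ σ e = e ∧ d ≠ e

instance : DecidablePred ThreePattern := fun σ => by unfold ThreePattern; infer_instance

def FivePattern (σ : Perm (Fin 5)) : Prop :=
  ∃ a, σ (σ (σ (σ (σ a)))) = a ∧ a ≠ σ a ∧ a ≠ σ (σ a) ∧ a ≠ σ (σ (σ a))

instance : DecidablePred FivePattern := fun σ => by unfold FivePattern; infer_instance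

lemma comb1 : ∀ σ : Perm (Fin 5), σ = 1 ∨ FixThree σ ∨ FixThree (σ * σ * σ) ∨
    DoubleSwap σ ∨ DoubleSwap (σ * σ) ∨ ThreePattern σ ∨ FivePattern σ := by decide +kernel

lemma comb2 : ∀ σ : Perm (Fin 5), σ 4 = 4 →
    (σ = 1 ∨ σ = swap 0 1 * swap 2 3 ∨ σ = swap 0 2 * swap 1 3 ∨
      σ = swap 0 1 * swap 2 3 * (swap 0 2 * swap 1 3)) ∨
    FixThree σ ∨ FixThree (swap 0 1 * swap 2 3 * σ) ∨ FixThree (swap 0 2 * swap 1 3 * σ) ∨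
    (∃ a d, σ (σ (σ a)) = a ∧ σ a ≠ a ∧ σ d = d ∧ d ≠ 4) := by decide +kernel

lemma comb3 : ∀ σ : Perm (Fin 5), σ 4 = 4 → σ * σ = 1 → Perm.sign σ = 1 →
    (σ = 1 ∨ σ = swap 0 1 * swap 2 3 ∨ σ = swap 0 2 * swap 1 3 ∨
      σ = swap 0 1 * swap 2 3 * (swap 0 2 * swap 1 3)) := by
  decide +kernel

lemma comb4 : ∀ σ : Perm (Fin 5), σ * σ = 1 → ∃ j, σ j = j := by decide +kernel

lemma comb5 : ∀ i j : Fin 5, i ≠ 4 → j ≠ 4 → i = j ∨ (swap 0 1 * swap 2 3 : Perm (Fin 5)) i = j ∨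
    (swap 0 2 * swap 1 3 : Perm (Fin 5)) i = j ∨
    (swap 0 1 * swap 2 3 * (swap 0 2 * swap 1 3) : Perm (Fin 5)) i = j := by decide +kernel

/-! ### Sharpness facts about an abstract action -/

section Abstract

variable {P X : Type*} [Group P] [MulAction P X]

def Sharp (P X : Type*) [Group P] [MulAction P X] : Prop :=
  ∀ (g : P) (a b c : X), a ≠ b → a ≠ c → b ≠ c → g • a = a → g • b = b → g • c = c → g = 1

def HasKlein (P X : Type*) [Group P] [MulAction P X] : Prop :=
  ∀ a b c d : X, a ≠ b → a ≠ c → a ≠ d → b ≠ c → b ≠ d → c ≠ d →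
    ∃ g : P, g • a = b ∧ g • b = a ∧ g • c = d ∧ g • d = c

def OneFixed (P X : Type*) [Group P] [MulAction P X] : Prop :=
  ∀ g : P, g * g = 1 → g ≠ 1 → ∀ x y : X, g • x = x → g • y = y → x = y

lemma Sharp.eq (h1 : Sharp P X) {g h : P} {a b c : X} (hab : a ≠ b) (hac : a ≠ c) (hbc : b ≠ c)
    (ha : g • a = h • a) (hb : g • b = h • b) (hc : g • c = h • c) : g = h := by
  have := h1 (h⁻¹ * g) a b c hab hac hbc (by rw [mul_smul, ha, inv_smul_smul])
    (by rw [mul_smul, hb, inv_smul_smul]) (by rw [mul_smul, hc, inv_smul_smul])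
  exact (inv_mul_eq_one.mp this).symm

lemma three_lemma (h1 : Sharp P X) (h2 : HasKlein P X) (g : P) (a b c d e : X)
    (hab : a ≠ b) (hde : d ≠ e) (ga : g • a = b) (gb : g • b = c) (gc : g • c = a)
    (gd : g • d = d) (ge : g • e = e) :
    ∃ t : P, t • a = b ∧ t • b = a ∧ t • d = e ∧ t • e = d ∧ t • c = c := by
  have hfix : ∀ x, g • x = x → a ≠ x ∧ b ≠ x := by
    intro x hx
    constructor
    · rintro rfl; exact hab (hx.symm.trans ga)
    · rintro rfl
      exact hab (smul_left_cancel g (ga.trans hx.symm))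
  obtain ⟨t, ta, tb, td, te⟩ := h2 a b d e hab (hfix d gd).1 (hfix e ge).1 (hfix d gd).2
    (hfix e ge).2 hde
  refine ⟨t, ta, tb, td, te, ?_⟩
  have key : g * t * g = t := h1.eq (hfix d gd).1 (hfix e ge).1 hde
    (by simp only [mul_smul, ga, tb, ta]) (by simp only [mul_smul, gd, td, ge])
    (by simp only [mul_smul, gd, te, ge])
  have h : (g * t * g) • b = a := by rw [key, tb]
  simp only [mul_smul, gb] at h
  exact smul_left_cancel g (h.trans gc.symm)

lemma five_lemma (h1 : Sharp P X) (h2 : HasKlein P X) (g : P) (p0 p1 p2 p3 p4 : X)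
    (h01 : p0 ≠ p1) (h02 : p0 ≠ p2) (h03 : p0 ≠ p3)
    (g0 : g • p0 = p1) (g1 : g • p1 = p2) (g2 : g • p2 = p3) (g3 : g • p3 = p4)
    (g4 : g • p4 = p0) :
    ∃ t : P, t • p0 = p3 ∧ t • p3 = p0 ∧ t • p1 = p2 ∧ t • p2 = p1 ∧ t • p4 = p4 := by
  have h12 : p1 ≠ p2 := by rw [← g0, ← g1]; exact fun h => h01 (smul_left_cancel g h)
  have h23 : p2 ≠ p3 := by rw [← g1, ← g2]; exact fun h => h12 (smul_left_cancel g h)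
  have h13 : p1 ≠ p3 := by rw [← g0, ← g2]; exact fun h => h02 (smul_left_cancel g h)
  obtain ⟨t, t0, t3, t1, t2⟩ := h2 p0 p3 p1 p2 h03 h01 h02 h13.symm h23.symm h12
  refine ⟨t, t0, t3, t1, t2, ?_⟩
  have key : t = g * t * g := h1.eq h01 h02 h12
    (by simp only [mul_smul, g0, t1, g2, t0]) (by simp only [mul_smul, g1, t2, t1])
    (by simp only [mul_smul, g2, t3, g0, t2])
  have h : (g * t * g) • p3 = p0 := by rw [← key, t3]
  simp only [mul_smul, g3] at h
  exact smul_left_cancel g (h.trans g4.symm)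

lemma klein_lemma (h1 : Sharp P X) (h2 : HasKlein P X) (h3 : OneFixed P X) (t : P)
    (a b c d e : X) (hab : a ≠ b) (hac : a ≠ c) (had : a ≠ d) (hbc : b ≠ c) (hbd : b ≠ d)
    (hcd : c ≠ d) (ta : t • a = b) (tb : t • b = a) (tc : t • c = d) (td : t • d = c)
    (te : t • e = e) :
    ∃ s : P, s • a = c ∧ s • c = a ∧ s • b = d ∧ s • d = b ∧ s • e = e := by
  obtain ⟨s, sa, sc, sb, sd⟩ := h2 a c b d hac hab had hbc.symm hcd hbd
  refine ⟨s, sa, sc, sb, sd, ?_⟩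
  have hcomm : t * s = s * t := h1.eq hab hac hbc
    (by simp only [mul_smul, *]) (by simp only [mul_smul, *]) (by simp only [mul_smul, *])
  have htt : t * t = 1 := h1 _ a b c hab hac hbc
    (by simp only [mul_smul, *]) (by simp only [mul_smul, *]) (by simp only [mul_smul, *])
  have ht1 : t ≠ 1 := by
    rintro rfl
    exact hab (by simpa using ta)
  refine h3 t htt ht1 _ _ ?_ te
  rw [← mul_smul, hcomm, mul_smul, te]

/-- Permutations of the labels of five points induced by the group. -/
def permGroup (P : Type*) {X : Type*} [Group P] [MulAction P X] (p : Fin 5 → X) :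
    Subgroup (Perm (Fin 5)) where
  carrier := {σ | ∃ g : P, ∀ i, g • p i = p (σ i)}
  mul_mem' := by
    rintro σ τ ⟨g, hg⟩ ⟨h, hh⟩
    exact ⟨g * h, fun i => by rw [mul_smul, hh, hg]; rfl⟩
  one_mem' := ⟨1, fun i => by simp⟩
  inv_mem' := by
    rintro σ ⟨g, hg⟩
    refine ⟨g⁻¹, fun i => ?_⟩
    rw [inv_smul_eq_iff, hg]
    simp

lemma mem_permGroup {p : Fin 5 → X} {σ : Perm (Fin 5)} :
    σ ∈ permGroup P p ↔ ∃ g : P, ∀ i, g • p i = p (σ i) := Iff.rfl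

open Pointwise in
lemma permGroup_equiv (h1 : Sharp P X) (p : Fin 5 → X) (hp : Function.Injective p) :
    Nonempty (MulAction.stabilizer P (Set.range p) ≃* permGroup P p) := by
  have key : ∀ g : MulAction.stabilizer P (Set.range p), ∃ σ : Perm (Fin 5),
      ∀ i, (g : P) • p i = p (σ i) := by
    rintro ⟨g, hg⟩
    have h : ∀ i, ∃ j, p j = g • p i := by
      intro i
      have : g • p i ∈ g • Set.range p := Set.smul_mem_smul_set ⟨i, rfl⟩
      rw [MulAction.mem_stabilizer_iff.mp hg] at this
      exact this
    choose f hf using h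
    have hinj : Function.Injective f := by
      intro i j hij
      apply hp
      apply smul_left_cancel g
      rw [← hf, ← hf, hij]
    exact ⟨Equiv.ofBijective f (Finite.injective_iff_bijective.mp hinj), fun i => (hf i).symm⟩
  choose F hF using key
  let φ : MulAction.stabilizer P (Set.range p) →* permGroup P p :=
    { toFun := fun g => ⟨F g, g, hF g⟩
      map_one' := by
        ext i : 2
        apply hp
        show p (F 1 i) = p i
        rw [← hF]
        simp
      map_mul' := by
        intro g h
        ext i : 2
        apply hp
        show p (F (g * h) i) = p (F g (F h i))
        rw [← hF, ← hF, ← hF, ← mul_smul]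
        rfl }
  refine ⟨MulEquiv.ofBijective φ ⟨?_, ?_⟩⟩
  · intro g h hgh
    have hgh' : F g = F h := congrArg Subtype.val hgh
    apply Subtype.ext
    refine h1.eq (a := p 0) (b := p 1) (c := p 2) (fun h => by simpa using hp h)
      (fun h => by simpa using hp h) (fun h => by simpa using hp h) ?_ ?_ ?_ <;>
      rw [hF, hF, hgh']
  · rintro ⟨σ, g, hg⟩
    have hmem : g ∈ MulAction.stabilizer P (Set.range p) := by
      rw [MulAction.mem_stabilizer_iff]
      ext x
      constructor
      · rintro ⟨_, ⟨i, rfl⟩, rfl⟩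
        exact ⟨σ i, (hg i).symm⟩
      · rintro ⟨i, rfl⟩
        exact ⟨p (σ.symm i), ⟨_, rfl⟩, by simpa using hg (σ.symm i)⟩
    refine ⟨⟨g, hmem⟩, ?_⟩
    ext i : 2
    apply hp
    show p (F ⟨g, hmem⟩ i) = p (σ i)
    rw [← hF, ← hg]

lemma permGroup_fixThree (h1 : Sharp P X) {p : Fin 5 → X} (hp : Function.Injective p)
    {σ : Perm (Fin 5)} (hσ : σ ∈ permGroup P p) : ¬ FixThree σ := by
  rintro ⟨hne, i, j, l, hij, hil, hjl, hi, hj, hl⟩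
  obtain ⟨g, hg⟩ := hσ
  have : g = 1 := h1 g (p i) (p j) (p l) (hp.ne hij) (hp.ne hil) (hp.ne hjl)
    (by rw [hg, hi]) (by rw [hg, hj]) (by rw [hg, hl])
  apply hne
  ext m : 1
  apply hp
  rw [← hg, this]
  simp

/-- Good labelling: the two generators of the Klein group are induced. -/
def Good (P : Type*) {X : Type*} [Group P] [MulAction P X] (p : Fin 5 → X) : Prop :=
  swap 0 1 * swap 2 3 ∈ permGroup P p ∧ swap 0 2 * swap 1 3 ∈ permGroup P p

lemma exists_good (h1 : Sharp P X) (h2 : HasKlein P X) (h3 : OneFixed P X) (t : P)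
    (a b c d e : X) (hinj : Function.Injective ![a, b, c, d, e])
    (ta : t • a = b) (tb : t • b = a) (tc : t • c = d) (td : t • d = c)
    (te : t • e = e) : Good P ![a, b, c, d, e] := by
  have hh : ∀ i j : Fin 5, i ≠ j → ![a, b, c, d, e] i ≠ ![a, b, c, d, e] j :=
    fun i j hij => hinj.ne hij
  obtain ⟨s, sa, sc, sb, sd, se⟩ := klein_lemma h1 h2 h3 t a b c d e
    (hh 0 1 (by decide)) (hh 0 2 (by decide)) (hh 0 3 (by decide)) (hh 1 2 (by decide))
    (hh 1 3 (by decide)) (hh 2 3 (by decide)) ta tb tc td te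
  constructor
  · refine ⟨t, fun i => ?_⟩
    fin_cases i
    · exact ta
    · exact tb
    · exact tc
    · exact td
    · exact te
  · refine ⟨s, fun i => ?_⟩
    fin_cases i
    · exact sa
    · exact sb
    · exact sc
    · exact sd
    · exact se

/-- Relabelling by a five-tuple of distinct labels. -/
lemma relabel {p : Fin 5 → X} (hp : Function.Injective p) (a b c d e : Fin 5)
    (h : Function.Injective ![a, b, c, d, e]) :
    Function.Injective ![p a, p b, p c, p d, p e] ∧
      Set.range ![p a, p b, p c, p d, p e] = Set.range p := by
  have heq : ![p a, p b, p c, p d, p e] = p ∘ ![a, b, c, d, e] := by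
    ext i
    fin_cases i <;> rfl
  rw [heq]
  exact ⟨hp.comp h, (Finite.injective_iff_surjective.mp h).range_comp p⟩

lemma inj5 : ∀ a b c d e : Fin 5, a ≠ b → a ≠ c → a ≠ d → a ≠ e → b ≠ c → b ≠ d → b ≠ e →
    c ≠ d → c ≠ e → d ≠ e → Function.Injective ![a, b, c, d, e] := by
  intro a b c d e hab hac had hae hbc hbd hbe hcd hce hde i j hij
  fin_cases i <;> fin_cases j <;> simp_all

lemma trivial_or_good (h1 : Sharp P X) (h2 : HasKlein P X) (h3 : OneFixed P X)
    (p : Fin 5 → X) (hp : Function.Injective p) :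
    permGroup P p = ⊥ ∨ ∃ q : Fin 5 → X, Function.Injective q ∧ Set.range q = Set.range p ∧
      Good P q := by
  by_cases hbot : permGroup P p = ⊥
  · exact Or.inl hbot
  right
  have hds : ∀ σ ∈ permGroup P p, DoubleSwap σ → ∃ q : Fin 5 → X, Function.Injective q ∧
      Set.range q = Set.range p ∧ Good P q := by
    rintro σ ⟨g, hg⟩ ⟨a, c, e, haa, hcc, ha, hc, hca, hca', he⟩
    have h := relabel hp a (σ a) c (σ c) e (by
      apply inj5 <;> grind [σ.injective])
    refine ⟨_, h.1, h.2, exists_good h1 h2 h3 g _ _ _ _ _ h.1 ?_ ?_ ?_ ?_ ?_⟩ <;> simp [hg, *]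
  obtain ⟨σ, hσ, hne⟩ := Subgroup.ne_bot_iff_exists_ne_one.mp hbot |>.elim
    fun s hs => (⟨s.1, s.2, fun h => hs (Subtype.ext h)⟩ : ∃ σ ∈ permGroup P p, σ ≠ 1)
  have hσ2 := mul_mem hσ hσ
  have hσ3 := mul_mem hσ2 hσ
  rcases comb1 σ with h | h | h | h | h | h | h
  · exact absurd h hne
  · exact absurd h (permGroup_fixThree h1 hp hσ)
  · exact absurd h (permGroup_fixThree h1 hp hσ3)
  · exact hds _ hσ h
  · exact hds _ hσ2 h
  · obtain ⟨g, hg⟩ := hσ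
    obtain ⟨a, d, e, haaa, ha, hd, he, hde⟩ := h
    obtain ⟨t, t1, t2, t3, t4, t5⟩ := three_lemma h1 h2 g (p a) (p (σ a)) (p (σ (σ a))) (p d) (p e)
      (hp.ne ha.symm) (hp.ne hde) (hg _) (hg _) (by rw [hg, haaa]) (by rw [hg, hd])
      (by rw [hg, he])
    have h := relabel hp a (σ a) d e (σ (σ a)) (by
      apply inj5 <;> grind [σ.injective])
    exact ⟨_, h.1, h.2, exists_good h1 h2 h3 t _ _ _ _ _ h.1 t1 t2 t3 t4 t5⟩
  · obtain ⟨g, hg⟩ := hσ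
    obtain ⟨a, h5, h01, h02, h03⟩ := h
    obtain ⟨t, t1, t2, t3, t4, t5⟩ := five_lemma h1 h2 g (p a) (p (σ a)) (p (σ (σ a)))
      (p (σ (σ (σ a)))) (p (σ (σ (σ (σ a)))))
      (hp.ne h01) (hp.ne h02) (hp.ne h03) (hg _) (hg _) (hg _) (hg _) (by rw [hg, h5])
    have h := relabel hp a (σ (σ (σ a))) (σ a) (σ (σ a)) (σ (σ (σ (σ a)))) (by
      apply inj5 <;> grind [σ.injective])
    exact ⟨_, h.1, h.2, exists_good h1 h2 h3 t _ _ _ _ _ h.1 t1 t2 t3 t4 t5⟩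

lemma good_cases (h1 : Sharp P X) (h2 : HasKlein P X) (p : Fin 5 → X)
    (hp : Function.Injective p) (hgood : Good P p) :
    IsKleinFour (permGroup P p) ∨ permGroup P p = alternatingGroup (Fin 5) := by
  obtain ⟨hA, hB⟩ := hgood
  have hAB := mul_mem hA hB
  by_cases h4 : ∀ σ ∈ permGroup P p, σ 4 = 4
  · left
    have hall : ∀ σ, σ ∈ permGroup P p ↔ σ ∈ ({1, swap 0 1 * swap 2 3, swap 0 2 * swap 1 3,
        swap 0 1 * swap 2 3 * (swap 0 2 * swap 1 3)} : Finset (Perm (Fin 5))) := by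
      intro σ
      simp only [Finset.mem_insert, Finset.mem_singleton]
      constructor
      · intro hσ
        rcases comb2 σ (h4 σ hσ) with h | h | h | h | h
        · exact h
        · exact absurd h (permGroup_fixThree h1 hp hσ)
        · exact absurd h (permGroup_fixThree h1 hp (mul_mem hA hσ))
        · exact absurd h (permGroup_fixThree h1 hp (mul_mem hB hσ))
        · exfalso
          have hσ4 := h4 σ hσ
          obtain ⟨g, hg⟩ := hσ
          obtain ⟨a, d, haaa, ha, hd, hd4⟩ := h
          obtain ⟨t, t1, t2, t3, t4, t5⟩ := three_lemma h1 h2 g (p a) (p (σ a)) (p (σ (σ a)))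
            (p d) (p 4) (hp.ne ha.symm) (hp.ne hd4) (hg _) (hg _) (by rw [hg, haaa])
            (by rw [hg, hd]) (by rw [hg, hσ4])
          have hinj : Function.Injective ![a, σ a, d, 4, σ (σ a)] := by
            apply inj5 <;> grind [σ.injective]
          let e : Perm (Fin 5) := Equiv.ofBijective _ (Finite.injective_iff_bijective.mp hinj)
          have hmem : e * (swap 0 1 * swap 2 3) * e⁻¹ ∈ permGroup P p := by
            refine ⟨t, fun i => ?_⟩
            obtain ⟨j, rfl⟩ := e.surjective i
            have hee : (e * (swap 0 1 * swap 2 3) * e⁻¹ : Perm (Fin 5)) (e j) =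
                e ((swap 0 1 * swap 2 3 : Perm (Fin 5)) j) := by
              simp [Perm.mul_apply]
            rw [hee]
            fin_cases j
            · exact t1
            · exact t2
            · exact t3
            · exact t4
            · exact t5
          have := h4 _ hmem
          have he3 : (4 : Fin 5) = e 3 := rfl
          have hee : (e * (swap 0 1 * swap 2 3) * e⁻¹ : Perm (Fin 5)) (e 3) =
              e ((swap 0 1 * swap 2 3 : Perm (Fin 5)) 3) := by
            simp [Perm.mul_apply]
          rw [he3, hee] at this
          exact hd4 this
      · rintro (rfl | rfl | rfl | rfl)
        · exact one_mem _
        · exact hA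
        · exact hB
        · exact hAB
    have hcard : Nat.card (permGroup P p) = 4 := by
      rw [Nat.subtype_card _ (fun σ => (hall σ).symm)]
      decide +kernel
    have hsq : ∀ x : permGroup P p, x ^ 2 = 1 := by
      rintro ⟨σ, hσ⟩
      apply Subtype.ext
      rw [hall] at hσ
      show σ ^ 2 = 1
      clear * - hσ
      revert σ
      decide +kernel
    refine ⟨hcard, ?_⟩
    have hdvd : Monoid.exponent (permGroup P p) ∣ 2 := Monoid.exponent_dvd_of_forall_pow_eq_one hsq
    rcases (Nat.dvd_prime Nat.prime_two).mp hdvd with h | h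
    · rw [Monoid.exp_eq_one_iff] at h
      have := Nat.card_of_subsingleton (1 : permGroup P p)
      omega
    · exact h
  · right
    push Not at h4
    obtain ⟨h, hh, hne⟩ := h4
    have htrans : ∀ j, ∃ σ ∈ permGroup P p, σ 4 = j := by
      intro j
      by_cases hj : j = 4
      · exact ⟨1, one_mem _, hj.symm⟩
      rcases comb5 (h 4) j hne hj with h' | h' | h' | h'
      · exact ⟨h, hh, h'⟩
      · exact ⟨_, mul_mem hA hh, h'⟩
      · exact ⟨_, mul_mem hB hh, h'⟩
      · exact ⟨_, mul_mem hAB hh, h'⟩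
    have hinv : ∀ σ : Perm (Fin 5), σ * σ = 1 → Perm.sign σ = 1 → σ ∈ permGroup P p := by
      intro σ hσσ hsign
      obtain ⟨j, hj⟩ := comb4 σ hσσ
      obtain ⟨τ, hτ, hτj⟩ := htrans j
      have hc : τ⁻¹ * σ * τ ∈ permGroup P p := by
        rcases comb3 (τ⁻¹ * σ * τ) (by
            rw [Perm.mul_apply, Perm.mul_apply, hτj, hj, Perm.inv_eq_iff_eq, hτj])
          (by
            have : τ⁻¹ * σ * τ * (τ⁻¹ * σ * τ) = τ⁻¹ * (σ * σ) * τ := by group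
            rw [this, hσσ]; group)
          (by simp [hsign]) with h' | h' | h' | h' <;> rw [h']
        · exact one_mem _
        · exact hA
        · exact hB
        · exact hAB
      have := mul_mem (mul_mem hτ hc) (inv_mem hτ)
      convert this using 1
      group
    have hle : alternatingGroup (Fin 5) ≤ permGroup P p := by
      rw [← Equiv.Perm.closure_cycleType_eq_two_two_eq_alternatingGroup (by simp),
        Subgroup.closure_le]
      intro σ hσ
      have hσ' : σ.cycleType = {2, 2} := hσ
      apply hinv
      · rw [← pow_two]
        apply orderOf_dvd_iff_pow_eq_one.mp
        rw [← Perm.lcm_cycleType, hσ']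
        decide
      · rw [Perm.sign_of_cycleType, hσ']
        decide
    refine le_antisymm ?_ hle
    intro σ hσ
    rw [Perm.mem_alternatingGroup]
    rcases Int.units_eq_one_or (Perm.sign σ) with h' | h'
    · exact h'
    · exfalso
      have hsw : swap 0 1 * σ⁻¹ ∈ permGroup P p := by
        apply hle
        rw [Perm.mem_alternatingGroup, Perm.sign_mul, Perm.sign_inv, h',
          Perm.sign_swap (by decide)]
        decide
      have := mul_mem hsw hσ
      rw [inv_mul_cancel_right] at this
      refine permGroup_fixThree h1 hp this ⟨by decide, 2, 3, 4, by decide, by decide, by decide,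
        by decide, by decide, by decide⟩

end Abstract

/-! ### The projective line -/

section Line

variable {k : Type*} [Field k]

lemma mk_eq_iff_cross (v w : Fin 2 → k) (hv : v ≠ 0) (hw : w ≠ 0) :
    Projectivization.mk k v hv = Projectivization.mk k w hw ↔ v 0 * w 1 = v 1 * w 0 := by
  rw [Projectivization.mk_eq_mk_iff']
  constructor
  · rintro ⟨a, rfl⟩
    simp only [Pi.smul_apply, smul_eq_mul]
    ring
  · intro h
    by_cases h0 : w 0 = 0
    · have h1 : w 1 ≠ 0 := by
        intro h1
        apply hw
        ext i
        fin_cases i <;> simp [h0, h1]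
      refine ⟨v 1 / w 1, ?_⟩
      ext i
      fin_cases i
      · simp [h0] at h ⊢
        simp_all
      · simp [h1]
    · refine ⟨v 0 / w 0, ?_⟩
      ext i
      fin_cases i
      · simp [h0]
      · simp only [Pi.smul_apply, smul_eq_mul, Fin.mk_one]
        field_simp
        linear_combination h

lemma smul_mk_eq_iff (A : GL (Fin 2) k) (v w : Fin 2 → k) (hv : v ≠ 0) (hw : w ≠ 0) :
    (QuotientGroup.mk A : GL (Fin 2) k ⧸ scalarSubgroup2 k) • Projectivization.mk k v hv =
      Projectivization.mk k w hw ↔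
    (A.1 0 0 * v 0 + A.1 0 1 * v 1) * w 1 = (A.1 1 0 * v 0 + A.1 1 1 * v 1) * w 0 := by
  have : (QuotientGroup.mk A : GL (Fin 2) k ⧸ scalarSubgroup2 k) • Projectivization.mk k v hv =
    A • Projectivization.mk k v hv := rfl
  rw [this, glActionP1_smul_mk, mk_eq_iff_cross]
  simp [Matrix.toLin'_apply, Matrix.mulVec, dotProduct, Fin.sum_univ_two]

lemma mk_eq_one_iff (A : GL (Fin 2) k) :
    (QuotientGroup.mk A : GL (Fin 2) k ⧸ scalarSubgroup2 k) = 1 ↔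
      A.1 0 1 = 0 ∧ A.1 1 0 = 0 ∧ A.1 0 0 = A.1 1 1 := by
  rw [QuotientGroup.eq_one_iff]
  constructor
  · rintro ⟨c, rfl⟩
    simp [Matrix.algebraMap_matrix_apply]
  · rintro ⟨h1, h2, h3⟩
    have hdet : A.1.det ≠ 0 := ((Matrix.isUnit_iff_isUnit_det _).mp A.isUnit).ne_zero
    rw [Matrix.det_fin_two, h1, ← h3] at hdet
    have h0 : A.1 0 0 ≠ 0 := by
      intro h
      simp [h] at hdet
    refine ⟨Units.mk0 _ h0, ?_⟩
    apply Units.ext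
    ext i j
    fin_cases i <;> fin_cases j <;> simp [Matrix.algebraMap_matrix_apply, h1, h2, h3]

lemma pgl_sharp : Sharp (GL (Fin 2) k ⧸ scalarSubgroup2 k) (Projectivization k (Fin 2 → k)) := by
  intro g a b c hab hac hbc ha hb hc
  induction g using QuotientGroup.induction_on with
  | H A =>
  induction a using Projectivization.ind with
  | h u hu =>
  induction b using Projectivization.ind with
  | h v hv =>
  induction c using Projectivization.ind with
  | h w hw =>
  rw [smul_mk_eq_iff] at ha hb hc
  rw [Ne, mk_eq_iff_cross, ← sub_eq_zero] at hab hac hbc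
  rw [mk_eq_one_iff]
  have hD := mul_ne_zero (mul_ne_zero hab hac) hbc
  generalize A.1 0 0 = a at *
  generalize A.1 0 1 = b at *
  generalize A.1 1 0 = c at *
  generalize A.1 1 1 = d at *
  generalize u 0 = u0 at *
  generalize u 1 = u1 at *
  generalize v 0 = v0 at *
  generalize v 1 = v1 at *
  generalize w 0 = w0 at *
  generalize w 1 = w1 at *
  refine ⟨?_, ?_, ?_⟩
  · refine (mul_eq_zero.mp (?_ : _ * b = 0)).resolve_left hD
    linear_combination (v0 ^ 2 * w0 * w1 - v0 * v1 * w0 ^ 2) * ha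
      - (u0 ^ 2 * w0 * w1 - u0 * u1 * w0 ^ 2) * hb + (u0 ^ 2 * v0 * v1 - u0 * u1 * v0 ^ 2) * hc
  · refine (mul_eq_zero.mp (?_ : _ * c = 0)).resolve_left hD
    linear_combination -(v0 * v1 * w1 ^ 2 - v1 ^ 2 * w0 * w1) * ha
      + (u0 * u1 * w1 ^ 2 - u1 ^ 2 * w0 * w1) * hb - (u0 * u1 * v1 ^ 2 - u1 ^ 2 * v0 * v1) * hc
  · rw [← sub_eq_zero]
    refine (mul_eq_zero.mp (?_ : _ * (a - d) = 0)).resolve_left hD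
    linear_combination -(v0 ^ 2 * w1 ^ 2 - v1 ^ 2 * w0 ^ 2) * ha
      + (u0 ^ 2 * w1 ^ 2 - u1 ^ 2 * w0 ^ 2) * hb - (u0 ^ 2 * v1 ^ 2 - u1 ^ 2 * v0 ^ 2) * hc

lemma pgl_oneFixed [CharP k 2] :
    OneFixed (GL (Fin 2) k ⧸ scalarSubgroup2 k) (Projectivization k (Fin 2 → k)) := by
  intro g hgg hg a b ha hb
  by_contra hab
  apply hg
  induction g using QuotientGroup.induction_on with
  | H A =>
  induction a using Projectivization.ind with
  | h u hu =>
  induction b using Projectivization.ind with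
  | h v hv =>
  rw [smul_mk_eq_iff] at ha hb
  rw [mk_eq_iff_cross, ← sub_eq_zero] at hab
  rw [← QuotientGroup.mk_mul, mk_eq_one_iff] at hgg
  simp only [Units.val_mul, Matrix.mul_apply, Fin.sum_univ_two] at hgg
  rw [mk_eq_one_iff]
  have h2 : (2 : k) = 0 := CharTwo.two_eq_zero
  have hD := pow_ne_zero 2 hab
  obtain ⟨-, -, h3⟩ := hgg
  generalize A.1 0 0 = a at *
  generalize A.1 0 1 = b at *
  generalize A.1 1 0 = c at *
  generalize A.1 1 1 = d at *
  have had : a = d := by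
    rw [← sub_eq_zero]
    apply pow_eq_zero_iff (two_ne_zero) |>.mp
    linear_combination h3 + (d ^ 2 - a * d) * h2
  subst had
  refine ⟨?_, ?_, rfl⟩
  · refine (mul_eq_zero.mp (?_ : _ * b = 0)).resolve_left hD
    linear_combination (v 0 ^ 2) * ha + (u 0 ^ 2) * hb + (c * u 0 ^ 2 * v 0 ^ 2
      - b * u 0 * u 1 * v 0 * v 1) * h2
  · refine (mul_eq_zero.mp (?_ : _ * c = 0)).resolve_left hD
    linear_combination (v 1 ^ 2) * ha + (u 1 ^ 2) * hb + (c * u 0 ^ 2 * v 1 ^ 2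
      + c * u 1 ^ 2 * v 0 ^ 2 - b * u 1 ^ 2 * v 1 ^ 2
      - c * u 0 * u 1 * v 0 * v 1) * h2

lemma pgl_hasKlein :
    HasKlein (GL (Fin 2) k ⧸ scalarSubgroup2 k) (Projectivization k (Fin 2 → k)) := by
  intro a b c d hab hac had hbc hbd hcd
  induction a using Projectivization.ind with
  | h a ha =>
  induction b using Projectivization.ind with
  | h b hb =>
  induction c using Projectivization.ind with
  | h c hc =>
  induction d using Projectivization.ind with
  | h d hd =>
  rw [Ne, mk_eq_iff_cross, ← sub_eq_zero] at hab hac had hbc hbd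
  let s := (a 0 * c 1 - a 1 * c 0) * (a 0 * d 1 - a 1 * d 0)
  let t := (b 0 * c 1 - b 1 * c 0) * (b 0 * d 1 - b 1 * d 0)
  let M : Matrix (Fin 2) (Fin 2) k := !![s * b 1 * b 0 - t * a 1 * a 0, -s * b 0 * b 0 + t * a 0 * a 0;
    s * b 1 * b 1 - t * a 1 * a 1, -s * b 0 * b 1 + t * a 0 * a 1]
  have hdet : M.det ≠ 0 := by
    have : M.det = - (s * t * (a 0 * b 1 - a 1 * b 0) ^ 2) := by
      simp only [M, Matrix.det_fin_two_of]
      ring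
    rw [this]
    exact neg_ne_zero.mpr (mul_ne_zero (mul_ne_zero (mul_ne_zero hac had) (mul_ne_zero hbc hbd))
      (pow_ne_zero 2 hab))
  refine ⟨QuotientGroup.mk (Matrix.GeneralLinearGroup.mkOfDetNeZero M hdet), ?_, ?_, ?_, ?_⟩ <;>
  · rw [smul_mk_eq_iff]
    simp only [Matrix.GeneralLinearGroup.mkOfDetNeZero, Matrix.GeneralLinearGroup.mk', M, s, t]
    simp [Matrix.unitOfDetInvertible]
    ring

end Line

end Helpers

/-- In characteristic 2, the stabilizer in `PGL₂(k)` of a set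
of 5 points of `ℙ¹(k)` is a finite group isomorphic to exactly one of: the
trivial group, the Klein four-group, or the alternating group `A₅`. -/
theorem stmt19 {k : Type*} [Field k] [IsAlgClosed k] (hchar : ringChar k = 2)
    (S : Set (Projectivization k (Fin 2 → k))) (hS : S.Finite)
    (hS5 : S.ncard = 5) :
    Finite (MulAction.stabilizer (GL (Fin 2) k ⧸ scalarSubgroup2 k) S) ∧
    (Nonempty ((MulAction.stabilizer (GL (Fin 2) k ⧸ scalarSubgroup2 k) S) ≃*
        PUnit) ∨
     Nonempty ((MulAction.stabilizer (GL (Fin 2) k ⧸ scalarSubgroup2 k) S) ≃*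
        Multiplicative (ZMod 2 × ZMod 2)) ∨
     Nonempty ((MulAction.stabilizer (GL (Fin 2) k ⧸ scalarSubgroup2 k) S) ≃*
        alternatingGroup (Fin 5))) := by
  haveI : CharP k 2 := ringChar.of_eq hchar
  have h1 := pgl_sharp (k := k)
  have h2 := pgl_hasKlein (k := k)
  have h3 := pgl_oneFixed (k := k)
  haveI := hS.to_subtype
  obtain ⟨p, hp, rfl⟩ : ∃ p : Fin 5 → Projectivization k (Fin 2 → k),
      Function.Injective p ∧ Set.range p = S := by
    have e : S ≃ Fin 5 := Finite.equivFinOfCardEq hS5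
    refine ⟨fun i => (e.symm i : Projectivization k (Fin 2 → k)),
      Subtype.val_injective.comp e.symm.injective, ?_⟩
    have := e.symm.surjective.range_comp (Subtype.val : S → Projectivization k (Fin 2 → k))
    simpa [Function.comp_def] using this
  obtain ⟨φ⟩ := permGroup_equiv h1 p hp
  refine ⟨Finite.of_equiv _ φ.toEquiv.symm, ?_⟩
  rcases trivial_or_good h1 h2 h3 p hp with h | ⟨q, hq, hqp, hgood⟩
  · left
    haveI : Subsingleton (permGroup (GL (Fin 2) k ⧸ scalarSubgroup2 k) p) := by
      rw [h]; infer_instance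
    haveI := φ.toEquiv.subsingleton
    haveI : Unique (MulAction.stabilizer (GL (Fin 2) k ⧸ scalarSubgroup2 k) (Set.range p)) :=
      { default := 1, uniq := fun _ => Subsingleton.elim _ _ }
    exact ⟨MulEquiv.ofUnique⟩
  · right
    rw [← hqp]
    obtain ⟨ψ⟩ := permGroup_equiv h1 q hq
    rcases good_cases h1 h2 q hq hgood with h | h
    · left
      obtain ⟨χ⟩ := IsKleinFour.nonempty_mulEquiv
        (G₁ := permGroup (GL (Fin 2) k ⧸ scalarSubgroup2 k) q)
        (G₂ := Multiplicative (ZMod 2 × ZMod 2))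
      exact ⟨ψ.trans χ⟩
    · right
      exact ⟨ψ.trans (MulEquiv.subgroupCongr h)⟩
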